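/- Every named Boolean formula b with FN(b) ⊆ X ∪ {a}, where X is a finite set of names and a ∉ X, admits an a-decomposition in X: there exist k and named Boolean formulas d₀,…,d_{k−1} and e₀,…,e_{k−1} with FN(dᵢ) ⊆ {a}, FN(eᵢ) ⊆ X, ⟦⋁_{i<k} dᵢ ∧ eᵢ⟧_{X∪{a}} = ⟦b⟧_{X∪{a}}, and ⟦eᵢ⟧_X ∩ ⟦eⱼ⟧_X = ∅ for i ≠ j. -/

import Mathlib

open MeasureTheory

/-- The Cantor space `2^ω` of infinite binary sequences. -/
abbrev Cantor : Type := ℕ → Bool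

/-- Rational numbers in the unit interval `[0,1]`. -/
abbrev I01 : Type := (Set.Icc (0 : ℚ) 1)

/-- The value of a rational `q ∈ [0,1]` as an extended nonnegative real. -/
noncomputable def qq (q : I01) : ENNReal := ENNReal.ofReal (q.1 : ℝ)

/-- `μ` is the fair-coin Bernoulli (uniform) product measure on the Cantor space:
it is a probability measure giving each cylinder fixing the values on a finite set `s`
of coordinates the measure `2^{-|s|}`. -/
def IsCantorMeasure (μ : Measure Cantor) : Prop :=
  IsProbabilityMeasure μ ∧
    ∀ (s : Finset ℕ) (v : ℕ → Bool),
      μ {f : Cantor | ∀ i ∈ s, f i = v i} = (2 : ENNReal)⁻¹ ^ s.card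

/-- Valuations of the names in a finite name set `X`: the space `(2^ω)^X`. -/
abbrev Val (X : Finset ℕ) : Type := {a : ℕ // a ∈ X} → Cantor

/-- `combine f g` is the common extension `f + g` of valuations `f ∈ (2^ω)^X` and
`g ∈ (2^ω)^Y`: it agrees with `f` on `X` and with `g` on `Y` (when `X` and `Y` are
disjoint this is the `f + g` of the paper). -/
def combine {X Y : Finset ℕ} (f : Val X) (g : Val Y) : Val (X ∪ Y) :=
  fun a =>
    if h : a.1 ∈ Y then g ⟨a.1, h⟩
    else f ⟨a.1, (Finset.mem_union.mp a.2).resolve_right h⟩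

/-- The `f`-projection `Π_f(𝒳) = {g ∈ (2^ω)^Y | f + g ∈ 𝒳}` of a set
`𝒳 ⊆ (2^ω)^{X∪Y}` along `f ∈ (2^ω)^X`. -/
def proj {X Y : Finset ℕ} (f : Val X) (S : Set (Val (X ∪ Y))) : Set (Val Y) :=
  {g | combine f g ∈ S}

/-- The fair-coin Bernoulli (uniform) product measure on `(2^ω)^X`, obtained as the
pushforward of the Cantor measure `μ` along the (coordinate-separating) injection
determined by the pairing function: the coordinates `(a, i)` are i.i.d. fair coins. -/
noncomputable def cantorPi (μ : Measure Cantor) (X : Finset ℕ) : Measure (Val X) :=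
  Measure.map (fun (g : Cantor) (a : {x : ℕ // x ∈ X}) (i : ℕ) => g (Nat.pair a.1 i)) μ

/-- Named Boolean formulas `b ::= xᵢᵃ | ⊤ | ⊥ | ¬b | b ∧ c | b ∨ c`.
`NBF.var i a` is the named propositional variable `xᵢᵃ`. -/
inductive NBF : Type where
  | var : ℕ → ℕ → NBF
  | tt : NBF
  | ff : NBF
  | neg : NBF → NBF
  | conj : NBF → NBF → NBF
  | disj : NBF → NBF → NBF
deriving DecidableEq

/-- The set of (free) names occurring in a named Boolean formula. -/
def NBF.FN : NBF → Finset ℕ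
  | .var _ a => {a}
  | .tt => ∅
  | .ff => ∅
  | .neg b => b.FN
  | .conj b c => b.FN ∪ c.FN
  | .disj b c => b.FN ∪ c.FN

/-- The interpretation `⟦b⟧_X ⊆ (2^ω)^X` of a named Boolean formula with `FN(b) ⊆ X`. -/
def NBF.semN : NBF → (X : Finset ℕ) → Set (Val X)
  | .var i a, X => {f | ∀ h : a ∈ X, f ⟨a, h⟩ i = true}
  | .tt, _ => Set.univ
  | .ff, _ => ∅
  | .neg b, X => (b.semN X)ᶜ
  | .conj b c, X => b.semN X ∩ c.semN X
  | .disj b c, X => b.semN X ∪ c.semN X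

/-- The disjunction `⋁_{i<k} c i` of a finite family of named Boolean formulas. -/
def NBF.bigDisj {k : ℕ} (c : Fin k → NBF) : NBF :=
  (List.ofFn c).foldr NBF.disj NBF.ff

def NBF.ev (g : ℕ → ℕ → Bool) : NBF → Prop
  | .var i a => g a i = true
  | .tt => True
  | .ff => False
  | .neg b => ¬ b.ev g
  | .conj b c => b.ev g ∧ c.ev g
  | .disj b c => b.ev g ∨ c.ev g

def extVal {X : Finset ℕ} (f : Val X) : ℕ → ℕ → Bool :=
  fun a i => if h : a ∈ X then f ⟨a, h⟩ i else true

theorem mem_semN_iff (b : NBF) (X : Finset ℕ) (f : Val X) :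
    f ∈ b.semN X ↔ b.ev (extVal f) := by
  induction b with
  | var i a =>
    by_cases h : a ∈ X <;> simp [NBF.semN, NBF.ev, extVal, h]
  | tt => simp [NBF.semN, NBF.ev]
  | ff => simp [NBF.semN, NBF.ev]
  | neg b ih => simp [NBF.semN, NBF.ev, ih]
  | conj b c ihb ihc => simp [NBF.semN, NBF.ev, ihb, ihc]
  | disj b c ihb ihc => simp [NBF.semN, NBF.ev, ihb, ihc]

theorem ev_foldr (g : ℕ → ℕ → Bool) (l : List NBF) :
    (l.foldr NBF.disj NBF.ff).ev g ↔ ∃ c ∈ l, c.ev g := by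
  induction l with
  | nil => simp [NBF.ev]
  | cons x l ih => simp [NBF.ev, ih]

theorem ev_bigDisj (g : ℕ → ℕ → Bool) {k : ℕ} (c : Fin k → NBF) :
    (NBF.bigDisj c).ev g ↔ ∃ i, (c i).ev g := by
  unfold NBF.bigDisj
  rw [ev_foldr]
  simp [List.mem_ofFn]

theorem exists_part (X : Finset ℕ) (a : ℕ) (b : NBF) (hFN : b.FN ⊆ X ∪ {a}) :
    ∃ (ι : Type) (_ : Fintype ι) (d e : ι → NBF),
      (∀ i, (d i).FN ⊆ {a}) ∧ (∀ i, (e i).FN ⊆ X) ∧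
      (∀ g, ∃ i, (e i).ev g) ∧
      (∀ g i j, (e i).ev g → (e j).ev g → i = j) ∧
      (∀ g i, (e i).ev g → (b.ev g ↔ (d i).ev g)) := by
  induction b with
  | var i c =>
    by_cases h : c = a
    · subst h
      exact ⟨Unit, inferInstance, fun _ => .var i c, fun _ => .tt, by simp [NBF.FN],
        by simp [NBF.FN], by simp [NBF.ev], by simp, by simp⟩
    · have hc : c ∈ X := by simpa [NBF.FN, h] using hFN
      refine ⟨Bool, inferInstance, fun t => if t then .tt else .ff,
        fun t => if t then .var i c else .neg (.var i c), ?_, ?_, ?_, ?_, ?_⟩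
      · simp [NBF.FN]
      · simp [NBF.FN, hc]
      · intro g
        cases h : g c i <;> simp [NBF.ev, h]
      · intro g i j
        cases i <;> cases j <;> simp_all [NBF.ev]
      · intro g i
        cases i <;> simp [NBF.ev]
  | tt =>
    exact ⟨Unit, inferInstance, fun _ => .tt, fun _ => .tt, by simp [NBF.FN],
        by simp [NBF.FN], by simp [NBF.ev], by simp, by simp⟩
  | ff =>
    exact ⟨Unit, inferInstance, fun _ => .ff, fun _ => .tt, by simp [NBF.FN],
        by simp [NBF.FN], by simp [NBF.ev], by simp, by simp⟩
  | neg b ih =>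
    obtain ⟨ι, _, d, e, h1, h2, h3, h4, h5⟩ := ih hFN
    exact ⟨ι, inferInstance, fun i => .neg (d i), e, h1, h2, h3, h4,
      fun g i hi => not_congr (h5 g i hi)⟩
  | conj b c ihb ihc =>
    obtain ⟨ι, _, d, e, h1, h2, h3, h4, h5⟩ := ihb (Finset.union_subset_left hFN)
    obtain ⟨κ, _, d', e', h1', h2', h3', h4', h5'⟩ := ihc (Finset.union_subset_right hFN)
    refine ⟨ι × κ, inferInstance, fun p => .conj (d p.1) (d' p.2),
      fun p => .conj (e p.1) (e' p.2), fun p => Finset.union_subset (h1 _) (h1' _),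
      fun p => Finset.union_subset (h2 _) (h2' _), fun g => ?_,
      fun g i j hi hj => Prod.ext (h4 g _ _ hi.1 hj.1) (h4' g _ _ hi.2 hj.2),
      fun g i hi => and_congr (h5 g _ hi.1) (h5' g _ hi.2)⟩
    obtain ⟨i, hi⟩ := h3 g
    obtain ⟨j, hj⟩ := h3' g
    exact ⟨(i, j), hi, hj⟩
  | disj b c ihb ihc =>
    obtain ⟨ι, _, d, e, h1, h2, h3, h4, h5⟩ := ihb (Finset.union_subset_left hFN)
    obtain ⟨κ, _, d', e', h1', h2', h3', h4', h5'⟩ := ihc (Finset.union_subset_right hFN)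
    refine ⟨ι × κ, inferInstance, fun p => .disj (d p.1) (d' p.2),
      fun p => .conj (e p.1) (e' p.2), fun p => Finset.union_subset (h1 _) (h1' _),
      fun p => Finset.union_subset (h2 _) (h2' _), fun g => ?_,
      fun g i j hi hj => Prod.ext (h4 g _ _ hi.1 hj.1) (h4' g _ _ hi.2 hj.2),
      fun g i hi => or_congr (h5 g _ hi.1) (h5' g _ hi.2)⟩
    obtain ⟨i, hi⟩ := h3 g
    obtain ⟨j, hj⟩ := h3' g
    exact ⟨(i, j), hi, hj⟩

/-- **Existence of `a`-decompositions.** Every named Boolean formula `b`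
with `FN(b) ⊆ X ∪ {a}` and `a ∉ X` admits an `a`-decomposition in `X`: there are `k`
and formulas `d₀,…,d_{k-1}`, `e₀,…,e_{k-1}` with `FN(dᵢ) ⊆ {a}`, `FN(eᵢ) ⊆ X`,
`⟦⋁_{i<k} dᵢ ∧ eᵢ⟧_{X∪{a}} = ⟦b⟧_{X∪{a}}`, and `⟦eᵢ⟧_X ∩ ⟦eⱼ⟧_X = ∅` for `i ≠ j`. -/
theorem nbf_exists_aDecomposition
    (b : NBF) (X : Finset ℕ) (a : ℕ) (ha : a ∉ X) (hFN : b.FN ⊆ X ∪ {a}) :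
    ∃ (k : ℕ) (d e : Fin k → NBF),
      (∀ i, (d i).FN ⊆ {a}) ∧ (∀ i, (e i).FN ⊆ X) ∧
      NBF.semN (NBF.bigDisj fun i => (d i).conj (e i)) (X ∪ {a}) = NBF.semN b (X ∪ {a}) ∧
      (∀ i j, i ≠ j → NBF.semN (e i) X ∩ NBF.semN (e j) X = ∅) := by
  obtain ⟨ι, _, d, e, h1, h2, h3, h4, h5⟩ := exists_part X a b hFN
  let q := (Fintype.equivFin ι).symm
  refine ⟨Fintype.card ι, fun i => d (q i), fun i => e (q i), fun i => h1 _, fun i => h2 _,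
    ?_, ?_⟩
  · ext f
    rw [mem_semN_iff, mem_semN_iff, ev_bigDisj]
    constructor
    · rintro ⟨i, hd, he⟩
      exact (h5 _ _ he).2 hd
    · intro hb
      obtain ⟨i, hi⟩ := h3 (extVal f)
      refine ⟨q.symm i, ?_⟩
      simp only [Equiv.apply_symm_apply]
      exact ⟨(h5 _ _ hi).1 hb, hi⟩
  · intro i j hij
    ext f
    simp only [Set.mem_inter_iff, mem_semN_iff, Set.mem_empty_iff_false, iff_false]
    rintro ⟨hi, hj⟩
    exact hij (q.injective (h4 _ _ _ hi hj))
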